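/- (Guardedness theorem, preserv_Guard.) Let p be a protocol, n a nonce index and Ks a set of key indices. Assume preserv p n Ks: for every trace evs ∈ tr p, all rules R', R ∈ p and all substitutions s', s, if fresh R' s' n Ks evs, Guard n Ks (spies evs), safe Ks (spies evs) and ok evs R s, then the message of the event ap s (snd R) lies in guard n Ks. Then for every evs ∈ tr p such that fresh R' s' n Ks evs holds for some R' ∈ p and substitution s', safe Ks (spies evs) holds, and Guard n Ks (init Spy) holds, we have Guard n Ks (spies evs). -/

import Mathlib

inductive agent : Type
  | Server : agent
  | Friend : ℕ → agent
  | Spy : agent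
deriving DecidableEq

inductive msg : Type
  | Agent : agent → msg
  | Number : ℕ → msg
  | Nonce : ℕ → msg
  | Key : ℕ → msg
  | Hash : msg → msg
  | MPair : msg → msg → msg
  | Crypt : ℕ → msg → msg
deriving DecidableEq

inductive partsP (H : Set msg) : msg → Prop
  | Inj : ∀ X, X ∈ H → partsP H X
  | Fst : ∀ X Y, partsP H (msg.MPair X Y) → partsP H X
  | Snd : ∀ X Y, partsP H (msg.MPair X Y) → partsP H Y
  | Body : ∀ K X, partsP H (msg.Crypt K X) → partsP H X

/-- `parts H`: sub-components of messages of `H`. -/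
def parts (H : Set msg) : Set msg := {X | partsP H X}

inductive analzP (invKey : ℕ → ℕ) (H : Set msg) : msg → Prop
  | Inj : ∀ X, X ∈ H → analzP invKey H X
  | Fst : ∀ X Y, analzP invKey H (msg.MPair X Y) → analzP invKey H X
  | Snd : ∀ X Y, analzP invKey H (msg.MPair X Y) → analzP invKey H Y
  | Decrypt : ∀ K X, analzP invKey H (msg.Crypt K X) →
      analzP invKey H (msg.Key (invKey K)) → analzP invKey H X

/-- `analz invKey H`: what can be obtained by decomposing and decrypting messages of `H`. -/
def analz (invKey : ℕ → ℕ) (H : Set msg) : Set msg := {X | analzP invKey H X}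

inductive synthP (H : Set msg) : msg → Prop
  | Inj : ∀ X, X ∈ H → synthP H X
  | Ag : ∀ a, synthP H (msg.Agent a)
  | Num : ∀ n, synthP H (msg.Number n)
  | Hsh : ∀ X, synthP H X → synthP H (msg.Hash X)
  | Pr : ∀ X Y, synthP H X → synthP H Y → synthP H (msg.MPair X Y)
  | Cry : ∀ K X, synthP H X → msg.Key K ∈ H → synthP H (msg.Crypt K X)

/-- `synth H`: messages that can be synthesized from `H`. -/
def synth (H : Set msg) : Set msg := {X | synthP H X}

inductive guardP (invKey : ℕ → ℕ) (n : ℕ) (Ks : Set ℕ) : msg → Prop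
  | No_Nonce : ∀ X, msg.Nonce n ∉ parts {X} → guardP invKey n Ks X
  | Guard : ∀ K X, invKey K ∈ Ks → guardP invKey n Ks (msg.Crypt K X)
  | Cry : ∀ K X, guardP invKey n Ks X → guardP invKey n Ks (msg.Crypt K X)
  | Pr : ∀ X Y, guardP invKey n Ks X → guardP invKey n Ks Y →
      guardP invKey n Ks (msg.MPair X Y)

/-- `guard n Ks`: messages in which `Nonce n` is guarded by the keys of `Ks`. -/
def guardMsg (invKey : ℕ → ℕ) (n : ℕ) (Ks : Set ℕ) : Set msg := {X | guardP invKey n Ks X}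

/-- `Guard n Ks H`: every message of `H` lies in `guard n Ks`. -/
def Guard (invKey : ℕ → ℕ) (n : ℕ) (Ks : Set ℕ) (H : Set msg) : Prop :=
  ∀ X ∈ H, X ∈ guardMsg invKey n Ks
inductive event : Type
  | Says : agent → agent → msg → event
deriving DecidableEq

def msgOf : event → msg
  | event.Says _ _ X => X

/-- Set of messages sent in a trace. -/
def sent (evs : List event) : Set msg :=
  {X | ∃ A B, event.Says A B X ∈ evs}
/-- Agent patterns: an agent variable or an agent constant. -/
inductive apat : Type
  | AVar : ℕ → apat
  | ACst : agent → apat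

/-- Nonce patterns: a nonce variable or a nonce constant. -/
inductive npat : Type
  | NVar : ℕ → npat
  | NCst : ℕ → npat

/-- Key patterns: a key variable or a key constant. -/
inductive kpat : Type
  | KVar : ℕ → kpat
  | KCst : ℕ → kpat

/-- Message patterns: messages built over typed variables
(agent, nonce, key and message variables). -/
inductive mpat : Type
  | MAgent : apat → mpat
  | MNumber : ℕ → mpat
  | MNonce : npat → mpat
  | MKey : kpat → mpat
  | MHash : mpat → mpat
  | MPair : mpat → mpat → mpat
  | MCrypt : kpat → mpat → mpat
  | MVar : ℕ → mpat

/-- Event patterns. -/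
inductive epat : Type
  | SaysP : apat → apat → mpat → epat

/-- A substitution associates an agent to each agent variable, a nonce to each
nonce variable, a key to each key variable and a message to each message variable. -/
structure subst : Type where
  agentS : ℕ → agent
  nonceS : ℕ → ℕ
  keyS : ℕ → ℕ
  msgS : ℕ → msg

def apa (s : subst) : apat → agent
  | apat.AVar v => s.agentS v
  | apat.ACst a => a

def apn (s : subst) : npat → ℕ
  | npat.NVar v => s.nonceS v
  | npat.NCst n => n

def apk (s : subst) : kpat → ℕ
  | kpat.KVar v => s.keyS v
  | kpat.KCst k => k

/-- `apm s X`: the instance of a message pattern `X` by a substitution `s`. -/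
def apm (s : subst) : mpat → msg
  | mpat.MAgent a => msg.Agent (apa s a)
  | mpat.MNumber n => msg.Number n
  | mpat.MNonce p => msg.Nonce (apn s p)
  | mpat.MKey p => msg.Key (apk s p)
  | mpat.MHash X => msg.Hash (apm s X)
  | mpat.MPair X Y => msg.MPair (apm s X) (apm s Y)
  | mpat.MCrypt K X => msg.Crypt (apk s K) (apm s X)
  | mpat.MVar v => s.msgS v

/-- `ap s ev`: the instance of an event pattern `ev` by a substitution `s`. -/
def ap (s : subst) : epat → event
  | epat.SaysP a b X => event.Says (apa s a) (apa s b) (apm s X)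

/-- The nonce variables occurring in a message pattern. -/
def mNonceVars : mpat → Set ℕ
  | mpat.MNonce (npat.NVar v) => {v}
  | mpat.MHash X => mNonceVars X
  | mpat.MPair X Y => mNonceVars X ∪ mNonceVars Y
  | mpat.MCrypt _ X => mNonceVars X
  | _ => ∅

/-- The nonce variables occurring in an event pattern. -/
def eNonceVars : epat → Set ℕ
  | epat.SaysP _ _ X => mNonceVars X

/-- A rule is a pair of a set of event patterns (the preconditions)
and an event pattern (the conclusion). -/
abbrev rule : Type := Set epat × epat

/-- A protocol is a set of rules. -/
abbrev proto : Type := Set rule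

/-- `newn R`: the nonce variables occurring in the conclusion of `R`
and in no precondition. -/
def newn (R : rule) : Set ℕ :=
  {m | m ∈ eNonceVars R.2 ∧ ∀ x ∈ R.1, m ∉ eNonceVars x}

/-- `spies init evs`: the spy's initial knowledge together with all messages
sent in `evs`. -/
def spies (init : agent → Set msg) (evs : List event) : Set msg :=
  init agent.Spy ∪ sent evs

/-- `used init evs`: the parts of all agents' initial knowledge and of all
messages sent in `evs`. -/
def used (init : agent → Set msg) (evs : List event) : Set msg :=
  parts ((⋃ A, init A) ∪ sent evs)

/-- `ok evs R s`: the `s`-instance of every precondition of `R` occurs in `evs`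
and the `s`-instance of every new nonce of `R` has not been used yet. -/
def ok (init : agent → Set msg) (evs : List event) (R : rule) (s : subst) : Prop :=
  (∀ x ∈ R.1, ap s x ∈ evs) ∧
  (∀ m ∈ newn R, msg.Nonce (s.nonceS m) ∉ used init evs)

/-- The traces generated by a protocol. -/
inductive tr (invKey : ℕ → ℕ) (init : agent → Set msg) (p : proto) : List event → Prop
  | Nil : tr invKey init p []
  | Fake : ∀ evs B X, tr invKey init p evs →
      X ∈ synth (analz invKey (spies init evs)) →
      tr invKey init p (event.Says agent.Spy B X :: evs)
  | Rule : ∀ evs R s, tr invKey init p evs → R ∈ p → ok init evs R s →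
      tr invKey init p (ap s R.2 :: evs)

/-- `fresh R' s' n Ks evs`: the nonce `n` is introduced in `evs` by the
`s'`-instance of rule `R'`, in which it is guarded by `Ks`: some new nonce
variable of `R'` is instantiated to `n` by `s'`, the instance of the conclusion
of `R'` occurs in `evs`, its message lies in `guard n Ks`, and `Nonce n` does
not occur in any event of `evs` preceding that event. -/
def fresh (invKey : ℕ → ℕ) (R' : rule) (s' : subst) (n : ℕ) (Ks : Set ℕ)
    (evs : List event) : Prop :=
  (∃ m ∈ newn R', s'.nonceS m = n) ∧
  (∃ evs1 evs2 : List event, evs = evs1 ++ ap s' R'.2 :: evs2 ∧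
    msgOf (ap s' R'.2) ∈ guardMsg invKey n Ks ∧
    ∀ ev ∈ evs2, msg.Nonce n ∉ parts {msgOf ev})

/-- `safe Ks H`: no key of `Ks` can be obtained by analyzing `H`. -/
def safe (invKey : ℕ → ℕ) (Ks : Set ℕ) (H : Set msg) : Prop :=
  ∀ K ∈ Ks, msg.Key K ∉ analz invKey H

/-- `preserv p n Ks`: every rule of the protocol preserves the guardedness of
`n` w.r.t. `Ks` as long as the keys of `Ks` are safe. -/
def preserv (invKey : ℕ → ℕ) (init : agent → Set msg) (p : proto) (n : ℕ)
    (Ks : Set ℕ) : Prop :=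
  ∀ (evs : List event) (R' : rule) (s' : subst) (R : rule) (s : subst),
    tr invKey init p evs → R' ∈ p → R ∈ p →
    fresh invKey R' s' n Ks evs →
    Guard invKey n Ks (spies init evs) →
    safe invKey Ks (spies init evs) →
    ok init evs R s →
    msgOf (ap s R.2) ∈ guardMsg invKey n Ks

/-!
Without the keys of `Ks`, the spy cannot open an encryption that guards `Nonce n`, so guardedness is
stable under `analz`; composing messages never exposes a nonce, so it is also stable under `synth`.
Hence neither a fake nor, by `preserv`, a protocol step breaks guardedness once `n` has been
introduced. At the event introducing `n` itself, all earlier messages are guarded because they do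
not contain `n`.
-/

section Messages

variable {invKey : ℕ → ℕ} {n K : ℕ} {Ks : Set ℕ} {X Y : msg} {G H : Set msg}

theorem parts_singleton_subset (hX : X ∈ parts H) : parts {X} ⊆ parts H := by
  intro Y hY
  induction hY with
  | Inj Y hY => exact hY ▸ hX
  | Fst Y Z _ ih => exact partsP.Fst Y Z ih
  | Snd Y Z _ ih => exact partsP.Snd Y Z ih
  | Body K Y _ ih => exact partsP.Body K Y ih

theorem parts_singleton_eq_self (hpair : ∀ Y Z, X ≠ msg.MPair Y Z)
    (hcrypt : ∀ K Y, X ≠ msg.Crypt K Y) : parts {X} = {X} := by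
  refine Set.Subset.antisymm (fun _ hY => ?_) fun Y hY => partsP.Inj Y hY
  induction hY with
  | Inj _ hY => exact hY
  | Fst Y Z _ ih => exact absurd ih.symm (hpair Y Z)
  | Snd Y Z _ ih => exact absurd ih.symm (hpair Y Z)
  | Body K Y _ ih => exact absurd ih.symm (hcrypt K Y)

theorem analz_mono : Monotone (analz invKey) := by
  intro G H hGH X hX
  induction hX with
  | Inj X hX => exact analzP.Inj X (hGH hX)
  | Fst X Y _ ih => exact analzP.Fst X Y ih
  | Snd X Y _ ih => exact analzP.Snd X Y ih
  | Decrypt K X _ _ ihCrypt ihKey => exact analzP.Decrypt K X ihCrypt ihKey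

theorem safe.anti (hsafe : safe invKey Ks H) (hGH : G ⊆ H) : safe invKey Ks G :=
  fun K hK hKey => hsafe K hK (analz_mono hGH hKey)

theorem mem_guardMsg_of_mem_parts (hn : msg.Nonce n ∉ parts {X}) (hY : Y ∈ parts {X}) :
    Y ∈ guardMsg invKey n Ks :=
  guardP.No_Nonce Y fun h => hn (parts_singleton_subset hY h)

theorem mem_guardMsg_of_atomic (hpair : ∀ Y Z, X ≠ msg.MPair Y Z)
    (hcrypt : ∀ K Y, X ≠ msg.Crypt K Y) (hnonce : msg.Nonce n ≠ X) :
    X ∈ guardMsg invKey n Ks :=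
  guardP.No_Nonce X <| by rwa [parts_singleton_eq_self hpair hcrypt, Set.mem_singleton_iff]

theorem pair_mem_guardMsg_iff :
    msg.MPair X Y ∈ guardMsg invKey n Ks ↔ X ∈ guardMsg invKey n Ks ∧ Y ∈ guardMsg invKey n Ks := by
  refine ⟨fun h => ?_, fun h => guardP.Pr X Y h.1 h.2⟩
  have hself : partsP {msg.MPair X Y} (msg.MPair X Y) := partsP.Inj _ rfl
  cases h with
  | No_Nonce _ hn =>
    exact ⟨mem_guardMsg_of_mem_parts hn (partsP.Fst X Y hself),
      mem_guardMsg_of_mem_parts hn (partsP.Snd X Y hself)⟩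
  | Pr _ _ hX hY => exact ⟨hX, hY⟩

theorem crypt_mem_guardMsg_iff :
    msg.Crypt K X ∈ guardMsg invKey n Ks ↔ invKey K ∈ Ks ∨ X ∈ guardMsg invKey n Ks := by
  refine ⟨fun h => ?_, fun h => h.elim (guardP.Guard K X) (guardP.Cry K X)⟩
  cases h with
  | No_Nonce _ hn =>
    exact .inr (mem_guardMsg_of_mem_parts hn (partsP.Body K X (partsP.Inj _ rfl)))
  | Guard _ _ hK => exact .inl hK
  | Cry _ _ hX => exact .inr hX

theorem Guard.analz_of_safe (hG : Guard invKey n Ks H) (hsafe : safe invKey Ks H) :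
    Guard invKey n Ks (analz invKey H) := by
  intro X hX
  induction hX with
  | Inj X hX => exact hG X hX
  | Fst X Y _ ih => exact (pair_mem_guardMsg_iff.1 ih).1
  | Snd X Y _ ih => exact (pair_mem_guardMsg_iff.1 ih).2
  | Decrypt K X _ hKey ih _ =>
    exact (crypt_mem_guardMsg_iff.1 ih).resolve_left fun hK => hsafe _ hK hKey

theorem Guard.synth (hG : Guard invKey n Ks H) : Guard invKey n Ks (synth H) := by
  intro X hX
  induction hX with
  | Inj X hX => exact hG X hX
  | Ag a => exact mem_guardMsg_of_atomic nofun nofun nofun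
  | Num m => exact mem_guardMsg_of_atomic nofun nofun nofun
  -- `parts` does not look inside hashes, so a hash is guarded whatever its argument is.
  | Hsh X _ _ => exact mem_guardMsg_of_atomic nofun nofun nofun
  | Pr X Y _ _ ihX ihY => exact pair_mem_guardMsg_iff.2 ⟨ihX, ihY⟩
  | Cry K X _ _ ih => exact crypt_mem_guardMsg_iff.2 (.inr ih)

theorem guard_insert_iff :
    Guard invKey n Ks (insert X H) ↔ X ∈ guardMsg invKey n Ks ∧ Guard invKey n Ks H :=
  Set.forall_mem_insert

end Messages

section Traces

variable {invKey : ℕ → ℕ} {init : agent → Set msg} {p : proto} {n : ℕ} {Ks : Set ℕ}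
  {R' : rule} {s' : subst} {ev : event} {evs : List event}

theorem mem_sent_iff {X : msg} : X ∈ sent evs ↔ ∃ ev ∈ evs, msgOf ev = X :=
  ⟨fun ⟨A, B, h⟩ => ⟨event.Says A B X, h, rfl⟩, fun ⟨⟨A, B, _⟩, h, hX⟩ => ⟨A, B, hX ▸ h⟩⟩

theorem spies_cons : spies init (ev :: evs) = insert (msgOf ev) (spies init evs) := by
  ext X
  simp only [spies, Set.mem_union, Set.mem_insert_iff, mem_sent_iff, List.exists_mem_cons_iff,
    eq_comm (a := X)]
  exact or_left_comm

theorem Guard.spies_of_nonce_notMem_parts (hinit : Guard invKey n Ks (init agent.Spy))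
    (hn : ∀ ev ∈ evs, msg.Nonce n ∉ parts {msgOf ev}) : Guard invKey n Ks (spies init evs) := by
  rintro X (hX | hX)
  · exact hinit X hX
  · obtain ⟨ev, hev, rfl⟩ := mem_sent_iff.1 hX
    exact guardP.No_Nonce _ (hn ev hev)

theorem not_fresh_nil : ¬ fresh invKey R' s' n Ks [] := by
  rintro ⟨-, evs₁, evs₂, hsplit, -⟩
  exact List.append_ne_nil_of_right_ne_nil evs₁ (List.cons_ne_nil _ evs₂) hsplit.symm

theorem fresh.head_or_tail (hfresh : fresh invKey R' s' n Ks (ev :: evs)) :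
    (msgOf ev ∈ guardMsg invKey n Ks ∧ ∀ ev' ∈ evs, msg.Nonce n ∉ parts {msgOf ev'}) ∨
      fresh invKey R' s' n Ks evs := by
  obtain ⟨hnew, evs₁, evs₂, hsplit, hguard, hbefore⟩ := hfresh
  cases evs₁ with
  | nil =>
    obtain ⟨rfl, rfl⟩ := List.cons.inj hsplit
    exact .inl ⟨hguard, hbefore⟩
  | cons _ evs₁ => exact .inr ⟨hnew, evs₁, evs₂, (List.cons.inj hsplit).2, hguard, hbefore⟩

theorem tr.of_cons (hevs : tr invKey init p (ev :: evs)) : tr invKey init p evs := by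
  cases hevs with
  | Fake _ _ _ hevs => exact hevs
  | Rule _ _ _ hevs => exact hevs

theorem preserv.msgOf_mem_guardMsg (hpres : preserv invKey init p n Ks)
    (hevs : tr invKey init p (ev :: evs)) (hR' : R' ∈ p) (hfresh : fresh invKey R' s' n Ks evs)
    (hG : Guard invKey n Ks (spies init evs)) (hsafe : safe invKey Ks (spies init evs)) :
    msgOf ev ∈ guardMsg invKey n Ks := by
  cases hevs with
  | Fake _ _ X _ hX => exact (hG.analz_of_safe hsafe).synth X hX
  | Rule _ R s hevs hR hok => exact hpres evs R' s' R s hevs hR' hR hfresh hG hsafe hok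

theorem preserv_Guard_general (hpres : preserv invKey init p n Ks)
    (hevs : tr invKey init p evs)
    (hfresh : ∃ R' ∈ p, ∃ s' : subst, fresh invKey R' s' n Ks evs)
    (hsafe : safe invKey Ks (spies init evs))
    (hinit : Guard invKey n Ks (init agent.Spy)) :
    Guard invKey n Ks (spies init evs) := by
  obtain ⟨R', hR', s', hfresh⟩ := hfresh
  induction evs with
  | nil => exact absurd hfresh not_fresh_nil
  | cons ev evs ih =>
    rw [spies_cons] at hsafe ⊢
    rw [guard_insert_iff]
    rcases hfresh.head_or_tail with ⟨hev, hbefore⟩ | hfresh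
    · exact ⟨hev, hinit.spies_of_nonce_notMem_parts hbefore⟩
    · have hsafe := hsafe.anti (Set.subset_insert _ _)
      have hG := ih hevs.of_cons hsafe hfresh
      exact ⟨hpres.msgOf_mem_guardMsg hevs hR' hfresh hG hsafe, hG⟩

end Traces

/-- Guardedness theorem (`preserv_Guard`): if all the rules of the protocol
preserve the guardedness of `n` w.r.t. `Ks`, `n` was introduced guarded by
`Ks`, the keys of `Ks` are safe and `n` is guarded in the spy's initial
knowledge, then `n` is guarded in all traffic. -/
theorem preserv_Guard
    (invKey : ℕ → ℕ) (init : agent → Set msg) (p : proto) (n : ℕ) (Ks : Set ℕ)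
    (hinv : ∀ K, invKey (invKey K) = K)
    (hpres : preserv invKey init p n Ks)
    (evs : List event) (hevs : tr invKey init p evs)
    (hfresh : ∃ R' ∈ p, ∃ s' : subst, fresh invKey R' s' n Ks evs)
    (hsafe : safe invKey Ks (spies init evs))
    (hinit : Guard invKey n Ks (init agent.Spy)) :
    Guard invKey n Ks (spies init evs) := by
  exact preserv_Guard_general hpres hevs hfresh hsafe hinit
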